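/- arXiv:1311.7468 — 3 statements merged into one kernel-verified Lean document; each statement's English description precedes it below -/
import Mathlib

section
/- For every Laurent polynomial f over R, all real numbers r, s > 0, and every t ∈ [0,1], the Gauss norms satisfy |f|_{t·r + (1−t)·s} ≤ (|f|_r)^t · (|f|_s)^{1−t}; that is, r ↦ log|f|_r is convex. (For a monomial a·π^i this inequality is an equality.) -/
/-- The `r`-Gauss norm of a Laurent polynomial `f = ∑ i, (f i) π^i` (encoded as a finitely
supported function `ℤ →₀ R`) with respect to the parameter `ω ∈ (0,1)`:
`|f|_r = max_{i ∈ supp f} ‖f i‖ · ω^(r·i)`, with `|0|_r = 0`. -/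
noncomputable def gaussNorm {R : Type*} [NormedCommRing R] (ω : ℝ) (f : ℤ →₀ R) (r : ℝ) : ℝ :=
  ((f.support.sup fun i => (‖f i‖ * ω ^ (r * (i : ℝ))).toNNReal : NNReal) : ℝ)

/-- Hadamard three-circles inequality for Gauss norms: for `r, s > 0` and `t ∈ [0,1]`,
`|f|_{t·r + (1−t)·s} ≤ |f|_r^t · |f|_s^(1−t)`; that is, `r ↦ log |f|_r` is convex. -/
theorem gaussNorm_convex {R : Type*} [NormedCommRing R]
    (hna : ∀ x y : R, ‖x + y‖ ≤ max ‖x‖ ‖y‖)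
    (ω : ℝ) (hω0 : 0 < ω) (hω1 : ω < 1)
    (f : ℤ →₀ R) (r s : ℝ) (hr : 0 < r) (hs : 0 < s)
    (t : ℝ) (ht0 : 0 ≤ t) (ht1 : t ≤ 1) :
    gaussNorm ω f (t * r + (1 - t) * s) ≤
      (gaussNorm ω f r) ^ t * (gaussNorm ω f s) ^ (1 - t) := by
  have hterm : ∀ (q : ℝ) (i : ℤ), i ∈ f.support →
      ‖f i‖ * ω ^ (q * (i : ℝ)) ≤ gaussNorm ω f q := by
    intro q i hi
    have h : (‖f i‖ * ω ^ (q * (i : ℝ))).toNNReal ≤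
        f.support.sup fun i => (‖f i‖ * ω ^ (q * (i : ℝ))).toNNReal :=
      Finset.le_sup (f := fun i => (‖f i‖ * ω ^ (q * (i : ℝ))).toNNReal) hi
    exact (Real.le_coe_toNNReal _).trans (NNReal.coe_le_coe.mpr h)
  have hnn : ∀ q : ℝ, 0 ≤ gaussNorm ω f q := fun q => NNReal.coe_nonneg _
  have hR : 0 ≤ (gaussNorm ω f r) ^ t * (gaussNorm ω f s) ^ (1 - t) :=
    mul_nonneg (Real.rpow_nonneg (hnn r) _) (Real.rpow_nonneg (hnn s) _)
  have hle : ∀ i ∈ f.support, ‖f i‖ * ω ^ ((t * r + (1 - t) * s) * (i : ℝ)) ≤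
      (gaussNorm ω f r) ^ t * (gaussNorm ω f s) ^ (1 - t) := by
    intro i hi
    have hpos : 0 < ‖f i‖ := norm_pos_iff.mpr (Finsupp.mem_support_iff.mp hi)
    have hw : ∀ q : ℝ, 0 < ω ^ q := fun q => Real.rpow_pos_of_pos hω0 q
    have heq : ‖f i‖ * ω ^ ((t * r + (1 - t) * s) * (i : ℝ)) =
        (‖f i‖ * ω ^ (r * (i : ℝ))) ^ t * (‖f i‖ * ω ^ (s * (i : ℝ))) ^ (1 - t) := by
      rw [Real.mul_rpow hpos.le (hw _).le, Real.mul_rpow hpos.le (hw _).le,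
        ← Real.rpow_mul hω0.le, ← Real.rpow_mul hω0.le, mul_mul_mul_comm,
        ← Real.rpow_add hpos, ← Real.rpow_add hω0, add_sub_cancel, Real.rpow_one]
      congr 2
      ring
    rw [heq]
    have h1 : 0 ≤ ‖f i‖ * ω ^ (r * (i : ℝ)) := (mul_pos hpos (hw _)).le
    have h2 : 0 ≤ ‖f i‖ * ω ^ (s * (i : ℝ)) := (mul_pos hpos (hw _)).le
    exact mul_le_mul (Real.rpow_le_rpow h1 (hterm r i hi) ht0)
      (Real.rpow_le_rpow h2 (hterm s i hi) (by linarith))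
      (Real.rpow_nonneg h2 _) (Real.rpow_nonneg (hnn r) _)
  have hsup : (f.support.sup fun i =>
      (‖f i‖ * ω ^ ((t * r + (1 - t) * s) * (i : ℝ))).toNNReal) ≤
      ((gaussNorm ω f r) ^ t * (gaussNorm ω f s) ^ (1 - t)).toNNReal :=
    Finset.sup_le fun i hi => Real.toNNReal_le_toNNReal (hle i hi)
  exact (NNReal.coe_le_coe.mpr hsup).trans (Real.coe_toNNReal _ hR).le
end

section
/- Let u, v ∈ A satisfy u² = u, ‖u‖ ≥ 1, and ‖v − u‖ < ‖u‖^{-3}. Define a sequence by w₀ = v and w_{l+1} = 3·w_l² − 2·w_l³. Then: (i) ‖v² − v‖ ≤ ‖u‖·‖v − u‖ < ‖u‖^{-2}; and (ii) for every l ≥ 0, ‖w_l − u‖ ≤ ‖u‖²·‖v − u‖ and ‖w_l² − w_l‖ ≤ ‖u‖^{-2}·(‖v² − v‖·‖u‖²)^{2^l}. -/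
/-- Estimates for the modified Newton iteration `w ↦ 3w² − 2w³` applied to an approximation
`v` of an idempotent `u` in a (not necessarily commutative) normed ring whose norm is
ultrametric, submultiplicative and satisfies `‖1‖ = 1`. -/
theorem newton_iteration_estimates {A : Type*} [NormedRing A] [NormOneClass A]
    (hna : ∀ x y : A, ‖x + y‖ ≤ max ‖x‖ ‖y‖)
    (u v : A) (hu : u ^ 2 = u) (hu1 : 1 ≤ ‖u‖) (hv : ‖v - u‖ < ‖u‖ ^ (-3 : ℤ))
    (w : ℕ → A) (hw0 : w 0 = v)
    (hws : ∀ l : ℕ, w (l + 1) = 3 * (w l) ^ 2 - 2 * (w l) ^ 3) :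
    (‖v ^ 2 - v‖ ≤ ‖u‖ * ‖v - u‖ ∧ ‖v ^ 2 - v‖ < ‖u‖ ^ (-2 : ℤ)) ∧
    (∀ l : ℕ, ‖w l - u‖ ≤ ‖u‖ ^ 2 * ‖v - u‖ ∧
      ‖(w l) ^ 2 - w l‖ ≤ ‖u‖ ^ (-2 : ℤ) * (‖v ^ 2 - v‖ * ‖u‖ ^ 2) ^ (2 ^ l)) := by
  have hns : ∀ x y : A, ‖x - y‖ ≤ max ‖x‖ ‖y‖ := by
    intro x y
    have := hna x (-y)
    rwa [norm_neg, ← sub_eq_add_neg] at this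
  have hadd : ∀ (x y : A) (b : ℝ), ‖x‖ ≤ b → ‖y‖ ≤ b → ‖x + y‖ ≤ b :=
    fun x y b hx hy => (hna x y).trans (max_le hx hy)
  have hsub : ∀ (x y : A) (b : ℝ), ‖x‖ ≤ b → ‖y‖ ≤ b → ‖x - y‖ ≤ b :=
    fun x y b hx hy => (hns x y).trans (max_le hx hy)
  have h1 : ‖(1 : A)‖ ≤ 1 := norm_one.le
  have h2 : ‖(2 : A)‖ ≤ 1 := by
    rw [← one_add_one_eq_two]; exact hadd _ _ _ h1 h1
  have h3 : ‖(3 : A)‖ ≤ 1 := by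
    rw [← two_add_one_eq_three]; exact hadd _ _ _ h2 h1
  have h4 : ‖(4 : A)‖ ≤ 1 := by
    rw [← three_add_one_eq_four]; exact hadd _ _ _ h3 h1
  set c := ‖u‖ with hc
  set d := ‖v - u‖ with hd
  have hc0 : 0 < c := by linarith
  have hd0 : 0 ≤ d := norm_nonneg _
  have hz3 : c ^ (-3 : ℤ) = (c ^ 3)⁻¹ := by
    rw [zpow_neg]; norm_cast
  have hz2 : c ^ (-2 : ℤ) = (c ^ 2)⁻¹ := by
    rw [zpow_neg]; norm_cast
  rw [hz3] at hv
  rw [hz2]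
  have hdc3 : d * c ^ 3 < 1 := by
    rwa [← one_div, lt_div_iff₀ (by positivity)] at hv
  have hc2 : 1 ≤ c ^ 2 := one_le_pow₀ hu1
  have hc3 : 1 ≤ c ^ 3 := one_le_pow₀ hu1
  have hd1 : d ≤ 1 := by nlinarith
  have hcd : d ≤ c * d := by nlinarith
  have hy0 : ‖v ^ 2 - v‖ ≤ c * d := by
    have e : v ^ 2 - v = u * (v - u) + (v - u) * u + (v - u) * (v - u) - (v - u) := by
      have : v ^ 2 - v = u * (v - u) + (v - u) * u + (v - u) * (v - u) - (v - u)
          + (u ^ 2 - u) := by noncomm_ring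
      rw [this, hu, sub_self, add_zero]
    rw [e]
    refine hsub _ _ _ (hadd _ _ _ (hadd _ _ _ (norm_mul_le _ _) ?_) ?_) hcd
    · rw [mul_comm c d]; exact norm_mul_le _ _
    · refine (norm_mul_le _ _).trans ?_
      exact mul_le_mul_of_nonneg_right (hd1.trans hu1) hd0
  set y := ‖v ^ 2 - v‖ with hy
  have hyn : 0 ≤ y := norm_nonneg _
  have hyc : y * c ^ 2 < 1 := by
    calc y * c ^ 2 ≤ c * d * c ^ 2 := by gcongr
      _ = d * c ^ 3 := by ring
      _ < 1 := hdc3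
  refine ⟨⟨hy0, ?_⟩, ?_⟩
  · rw [← one_div, lt_div_iff₀ (by positivity)]; exact hyc
  have hinv : (c ^ 2)⁻¹ ≤ 1 := inv_le_one_of_one_le₀ hc2
  have hbd : ∀ l : ℕ, (c ^ 2)⁻¹ * (y * c ^ 2) ^ (2 ^ l) ≤ y := by
    intro l
    have : (y * c ^ 2) ^ (2 ^ l) ≤ y * c ^ 2 :=
      pow_le_of_le_one (by positivity) hyc.le (by positivity)
    calc _ ≤ (c ^ 2)⁻¹ * (y * c ^ 2) := by gcongr
      _ = y := by field_simp
  have hy1 : y ≤ 1 := by nlinarith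
  intro l
  induction l with
  | zero =>
    rw [hw0]
    refine ⟨?_, ?_⟩
    · change d ≤ _
      nlinarith
    · change y ≤ _
      apply le_of_eq
      field_simp
      try simp
  | succ l ih =>
    obtain ⟨ihu, ihy⟩ := ih
    rw [hws]
    set x := w l
    have hsy : ‖x ^ 2 - x‖ ≤ y := ihy.trans (hbd l)
    have hx : ‖x‖ ≤ c := by
      have e : x = (x - u) + u := by abel
      rw [e]
      refine hadd _ _ _ (ihu.trans ?_) le_rfl
      nlinarith
    constructor
    · have e : 3 * x ^ 2 - 2 * x ^ 3 - u = (x - u) + (x ^ 2 - x) * (1 - 2 * x) := by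
        noncomm_ring
      rw [e]
      refine hadd _ _ _ ihu ?_
      have : ‖1 - 2 * x‖ ≤ c := by
        refine hsub _ _ _ (h1.trans hu1) ((norm_mul_le _ _).trans ?_)
        nlinarith [norm_nonneg x]
      calc _ ≤ ‖x ^ 2 - x‖ * ‖1 - 2 * x‖ := norm_mul_le _ _
        _ ≤ (c * d) * c := by gcongr; exact hsy.trans hy0
        _ = c ^ 2 * d := by ring
    · have e : (3 * x ^ 2 - 2 * x ^ 3) ^ 2 - (3 * x ^ 2 - 2 * x ^ 3)
          = (x ^ 2 - x) * (x ^ 2 - x) * (4 * (x ^ 2 - x) - 3) := by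
        noncomm_ring
      rw [e]
      have h5 : ‖4 * (x ^ 2 - x) - 3‖ ≤ 1 := by
        refine hsub _ _ _ ((norm_mul_le _ _).trans ?_) h3
        exact mul_le_one₀ h4 (norm_nonneg _) (hsy.trans hy1)
      calc _ ≤ ‖x ^ 2 - x‖ * ‖x ^ 2 - x‖ * ‖4 * (x ^ 2 - x) - 3‖ :=
            (norm_mul_le _ _).trans (by gcongr; exact norm_mul_le _ _)
        _ ≤ ((c ^ 2)⁻¹ * (y * c ^ 2) ^ (2 ^ l)) * ((c ^ 2)⁻¹ * (y * c ^ 2) ^ (2 ^ l)) * 1 := by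
            gcongr
        _ = (c ^ 2)⁻¹ * ((c ^ 2)⁻¹ * (y * c ^ 2) ^ (2 ^ (l + 1))) := by ring
        _ ≤ 1 * ((c ^ 2)⁻¹ * (y * c ^ 2) ^ (2 ^ (l + 1))) := by gcongr
        _ = _ := one_mul _
end

section
/- Assume in addition that A is complete. Let u, v ∈ A satisfy u² = u, ‖u‖ ≥ 1, and ‖v − u‖ < ‖u‖^{-3}, and define w₀ = v, w_{l+1} = 3·w_l² − 2·w_l³. Then the sequence (w_l) converges to an element w ∈ A satisfying w² = w and ‖w − u‖ ≤ ‖u‖²·‖v − u‖ (in particular ‖w − u‖ < ‖u‖^{-1}). -/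
open Filter

/-- In a complete (not necessarily commutative) normed ring with ultrametric
submultiplicative norm and `‖1‖ = 1`, the modified Newton iteration `w ↦ 3w² − 2w³`
started at an approximation `v` of an idempotent `u` (with `‖v − u‖ < ‖u‖⁻³`) converges
to an idempotent `w` with `‖w − u‖ ≤ ‖u‖² · ‖v − u‖ < ‖u‖⁻¹`. -/
theorem newton_iteration_converges {A : Type*} [NormedRing A] [NormOneClass A]
    [CompleteSpace A]
    (hna : ∀ x y : A, ‖x + y‖ ≤ max ‖x‖ ‖y‖)
    (u v : A) (hu : u ^ 2 = u) (hu1 : 1 ≤ ‖u‖) (hv : ‖v - u‖ < ‖u‖ ^ (-3 : ℤ))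
    (w : ℕ → A) (hw0 : w 0 = v)
    (hws : ∀ l : ℕ, w (l + 1) = 3 * (w l) ^ 2 - 2 * (w l) ^ 3) :
    ∃ wlim : A, Tendsto w atTop (nhds wlim) ∧ wlim ^ 2 = wlim ∧
      ‖wlim - u‖ ≤ ‖u‖ ^ 2 * ‖v - u‖ ∧ ‖wlim - u‖ < ‖u‖ ^ (-1 : ℤ) := by
  have hneg : ∀ x y : A, ‖x - y‖ ≤ max ‖x‖ ‖y‖ := by
    intro x y
    have := hna x (-y)
    rwa [norm_neg, ← sub_eq_add_neg] at this
  have h2 : ‖(2 : A)‖ ≤ 1 := by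
    have := hna (1 : A) 1
    rw [one_add_one_eq_two] at this
    simpa using this
  have h3 : ‖(3 : A)‖ ≤ 1 := by
    have := hna (2 : A) 1
    rw [two_add_one_eq_three] at this
    exact this.trans (max_le h2 (by simp))
  have h4 : ‖(4 : A)‖ ≤ 1 := by
    have := hna (3 : A) 1
    rw [three_add_one_eq_four] at this
    exact this.trans (max_le h3 (by simp))
  have hsmul : ∀ c x : A, ‖c‖ ≤ 1 → ‖c * x‖ ≤ ‖x‖ := fun c x hc =>
    (norm_mul_le c x).trans (mul_le_of_le_one_left (norm_nonneg x) hc)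
  have hU0 : 0 < ‖u‖ := by linarith
  have hd0 : 0 ≤ ‖v - u‖ := norm_nonneg _
  have hd3 : ‖u‖ ^ 3 * ‖v - u‖ < 1 := by
    have h : ‖u‖ ^ (-3 : ℤ) = (‖u‖ ^ 3)⁻¹ := by
      rw [zpow_neg]; norm_cast
    rw [h] at hv
    have := mul_lt_mul_of_pos_left hv (pow_pos hU0 3)
    rwa [mul_inv_cancel₀ (pow_pos hU0 3).ne'] at this
  have hU2 : 1 ≤ ‖u‖ ^ 2 := one_le_pow₀ hu1
  have hd1 : ‖u‖ * (‖u‖ * (‖u‖ * ‖v - u‖)) < 1 := by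
    calc _ = ‖u‖ ^ 3 * ‖v - u‖ := by ring
      _ < 1 := hd3
  have hmono : ∀ x : ℝ, 0 ≤ x → x ≤ ‖u‖ * x := fun x hx => le_mul_of_one_le_left hx hu1
  have hr0 : 0 ≤ ‖u‖ * ‖v - u‖ := by positivity
  have hR0 : 0 ≤ ‖u‖ * (‖u‖ * ‖v - u‖) := by positivity
  have hdr := hmono _ hd0
  have hrR := hmono _ hr0
  have hR1 := hmono _ hR0
  have hr1 : ‖u‖ * ‖v - u‖ < 1 := by linarith
  -- the invariant
  have key : ∀ l, ‖w l - u‖ ≤ ‖u‖ * (‖u‖ * ‖v - u‖) ∧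
      ‖w l ^ 2 - w l‖ ≤ (‖u‖ * ‖v - u‖) * (‖u‖ * ‖v - u‖) ^ l ∧
      ‖w (l + 1) - w l‖ ≤ ‖u‖ * ‖w l ^ 2 - w l‖ := by
    have hstep : ∀ l, ‖w l - u‖ ≤ ‖u‖ * (‖u‖ * ‖v - u‖) →
        ‖w (l + 1) - w l‖ ≤ ‖u‖ * ‖w l ^ 2 - w l‖ := by
      intro l hl
      have hw : ‖w l‖ ≤ ‖u‖ := by
        have := hna (w l - u) u
        rw [sub_add_cancel] at this
        exact this.trans (max_le (by linarith) le_rfl)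
      have e : w (l + 1) - w l = (1 - 2 * w l) * (w l ^ 2 - w l) := by
        rw [hws]; noncomm_ring
      rw [e]
      refine (norm_mul_le _ _).trans (mul_le_mul_of_nonneg_right ?_ (norm_nonneg _))
      exact (hneg _ _).trans (max_le (by simpa using hu1) ((hsmul _ _ h2).trans hw))
    intro l
    induction l with
    | zero =>
      have h0 : ‖w 0 - u‖ ≤ ‖u‖ * (‖u‖ * ‖v - u‖) := by rw [hw0]; linarith
      refine ⟨h0, ?_, hstep 0 h0⟩
      have e : w 0 ^ 2 - w 0 = u * (v - u) + (v - u) * u + (v - u) * (v - u) - (v - u) := by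
        have : w 0 ^ 2 - w 0 =
            u * (v - u) + (v - u) * u + (v - u) * (v - u) - (v - u) + (u ^ 2 - u) := by
          rw [hw0]; noncomm_ring
        rw [this, hu]; simp
      rw [e, pow_zero, mul_one]
      refine (hneg _ _).trans (max_le ((hna _ _).trans (max_le ((hna _ _).trans
        (max_le (norm_mul_le _ _) ?_)) ?_)) hdr)
      · exact (norm_mul_le _ _).trans (mul_comm _ _).le
      · exact (norm_mul_le _ _).trans (mul_le_mul_of_nonneg_right (by linarith) hd0)
    | succ l ih =>
      obtain ⟨i1, i2, i3⟩ := ih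
      have hrl : (‖u‖ * ‖v - u‖) ^ l ≤ 1 := pow_le_one₀ hr0 hr1.le
      have i4 : ‖w l ^ 2 - w l‖ ≤ ‖u‖ * ‖v - u‖ :=
        i2.trans (mul_le_of_le_one_right hr0 hrl)
      have h1 : ‖w (l + 1) - u‖ ≤ ‖u‖ * (‖u‖ * ‖v - u‖) := by
        have := hna (w (l + 1) - w l) (w l - u)
        rw [sub_add_sub_cancel] at this
        exact this.trans (max_le (i3.trans (mul_le_mul_of_nonneg_left i4 hU0.le)) i1)
      refine ⟨h1, ?_, hstep _ h1⟩
      have e : w (l + 1) ^ 2 - w (l + 1) = (4 * (w l ^ 2 - w l) - 3) *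
          ((w l ^ 2 - w l) * (w l ^ 2 - w l)) := by
        rw [hws]; noncomm_ring
      rw [e]
      refine (hsmul _ _ ?_).trans ?_
      · exact (hneg _ _).trans (max_le ((hsmul _ _ h4).trans (by linarith)) h3)
      · refine (norm_mul_le _ _).trans ?_
        rw [pow_succ' (‖u‖ * ‖v - u‖) l]
        exact mul_le_mul i4 i2 (norm_nonneg _) hr0
  have hC : CauchySeq w := by
    refine cauchySeq_of_le_geometric (‖u‖ * ‖v - u‖) (‖u‖ * (‖u‖ * ‖v - u‖)) hr1 fun l => ?_
    obtain ⟨_, k2, k3⟩ := key l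
    rw [dist_comm, dist_eq_norm, mul_assoc]
    exact k3.trans (mul_le_mul_of_nonneg_left k2 hU0.le)
  obtain ⟨x, hx⟩ := cauchySeq_tendsto_of_complete hC
  have hb : ‖x - u‖ ≤ ‖u‖ ^ 2 * ‖v - u‖ := by
    refine le_of_tendsto (hx.sub_const u).norm (Eventually.of_forall fun l => ?_)
    exact (key l).1.trans (le_of_eq (by ring))
  refine ⟨x, hx, ?_, hb, ?_⟩
  · have t1 : Tendsto (fun l => w l ^ 2 - w l) atTop (nhds (x ^ 2 - x)) := (hx.pow 2).sub hx
    have t2 : Tendsto (fun l => w l ^ 2 - w l) atTop (nhds 0) := by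
      refine squeeze_zero_norm (fun l => (key l).2.1) ?_
      simpa using (tendsto_pow_atTop_nhds_zero_of_lt_one hr0 hr1).const_mul (‖u‖ * ‖v - u‖)
    exact sub_eq_zero.mp (tendsto_nhds_unique t1 t2)
  · refine hb.trans_lt ?_
    rw [zpow_neg_one, ← one_div, lt_div_iff₀ hU0]
    linarith
end
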